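/- Let N=(V,A,s,t,u) be a network, J ⊆ A a job set, and T ≥ 1 a time horizon. If J contains a minimum s-t cut S of N, then it is optimal to schedule all jobs at the same time: the maximum throughput over all schedules equals (T−1)·F(N,∅), and this is attained by assigning every job in J to period 1. -/

import Mathlib

/-!
The throughput of any schedule is bounded with the given minimum cut `S`. When `K` is removed,
weak duality gives `F K ≤ u(S) - u(S ∩ K)` (`flowValue_le_cut`). Every arc of `S` is a job, so
it is removed in exactly one of the `T` periods, and summing over the periods bounds the
throughput by `(T - 1) * u(S)`. By max-flow min-cut, `u(S) = F ∅`. With all jobs in period 1, the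
other `T - 1` periods carry `F ∅` each and period 1 carries a nonnegative amount, so the bound
is attained.

The strong half of max-flow min-cut (`exists_cut_eq`) is proved without augmenting paths: call
`w` reachable if some direction `d : A → ℝ` pointing into the box `[0, u]` at the maximum flow
`x` has net outflow `1_s - 1_w`. Such directions are closed under addition, so arcs leaving
the reachable set are saturated and arcs entering it are empty; and `t` is unreachable, since
otherwise a small step along `d` would increase the flow value (`exists_flow_gt`).
-/

open Finset

/-- Feasibility of a flow `x` in the network given by `src`, `tgt`, source `s`, sink `t`,
capacities `u`, with the arcs in `K` removed (shut down). -/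
def IsFlow {V A : Type*} [Fintype V] [Fintype A] [DecidableEq V]
    (src tgt : A → V) (s t : V) (u : A → ℝ) (K : Set A) (x : A → ℝ) : Prop :=
  (∀ a, 0 ≤ x a ∧ x a ≤ u a) ∧ (∀ a ∈ K, x a = 0) ∧
  ∀ v, v ≠ s → v ≠ t →
    ∑ a ∈ univ.filter (fun a => tgt a = v), x a =
      ∑ a ∈ univ.filter (fun a => src a = v), x a

/-- The value of a flow `x`: net outflow of the source `s`. -/
def flowValue {V A : Type*} [Fintype A] [DecidableEq V]
    (src tgt : A → V) (s : V) (x : A → ℝ) : ℝ :=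
  ∑ a ∈ univ.filter (fun a => src a = s), x a -
    ∑ a ∈ univ.filter (fun a => tgt a = s), x a

/-- The set of values of feasible flows when the arcs in `K` are removed.
`F K` (the max flow with `K` removed) is the greatest element of this set. -/
def flowValues {V A : Type*} [Fintype V] [Fintype A] [DecidableEq V]
    (src tgt : A → V) (s t : V) (u : A → ℝ) (K : Set A) : Set ℝ :=
  {z | ∃ x, IsFlow src tgt s t u K x ∧ z = flowValue src tgt s x}

/-- The throughput of the schedule `σ` over the time horizon `{1,…,T}`:
in time period `i` the arcs of `J` scheduled at `i` are shut down. -/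
def throughput {A : Type*} (F : Set A → ℝ) (J : Set A) (T : ℕ) (σ : A → ℕ) : ℝ :=
  ∑ i ∈ Finset.Icc 1 T, F {a | a ∈ J ∧ σ a = i}


/-- The capacity of the s-t cut determined by the node set `W`. -/
def cutCapacity {V A : Type*} [Fintype A] [DecidableEq V]
    (src tgt : A → V) (u : A → ℝ) (W : Finset V) : ℝ :=
  ∑ a ∈ univ.filter (fun a => src a ∈ W ∧ tgt a ∉ W), u a

/-- Net outflow of `x` at the node `v`. -/
def netOut {V A : Type*} [Fintype A] [DecidableEq V]
    (src tgt : A → V) (x : A → ℝ) (v : V) : ℝ :=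
  ∑ a, x a * ((if src a = v then 1 else 0) - (if tgt a = v then 1 else 0))

lemma netOut_eq_sub {V A : Type*} [Fintype A] [DecidableEq V]
    (src tgt : A → V) (x : A → ℝ) (v : V) :
    netOut src tgt x v = ∑ a ∈ univ.filter (fun a => src a = v), x a -
      ∑ a ∈ univ.filter (fun a => tgt a = v), x a := by
  simp only [netOut, mul_sub, Finset.sum_sub_distrib, mul_ite, mul_one, mul_zero,
    Finset.sum_filter]

lemma netOut_add {V A : Type*} [Fintype A] [DecidableEq V]
    (src tgt : A → V) (x y : A → ℝ) (v : V) :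
    netOut src tgt (x + y) v = netOut src tgt x v + netOut src tgt y v := by
  simp only [netOut, Pi.add_apply, add_mul, Finset.sum_add_distrib]

lemma netOut_smul {V A : Type*} [Fintype A] [DecidableEq V]
    (src tgt : A → V) (c : ℝ) (x : A → ℝ) (v : V) :
    netOut src tgt (c • x) v = c * netOut src tgt x v := by
  simp only [netOut, Pi.smul_apply, smul_eq_mul, Finset.mul_sum, mul_assoc]

lemma netOut_single {V A : Type*} [Fintype A] [DecidableEq V] [DecidableEq A]
    (src tgt : A → V) (a : A) (c : ℝ) (v : V) :
    netOut src tgt (Pi.single a c) v =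
      c * ((if src a = v then 1 else 0) - (if tgt a = v then 1 else 0)) := by
  rw [netOut, Finset.sum_eq_single a]
  · simp
  · intro b _ hb
    simp [hb]
  · simp

/-- The value of a flow equals its net flow across any s-t cut: add up the conservation
equations over the nodes of `W`. -/
lemma flowValue_eq_across {V A : Type*} [Fintype V] [Fintype A] [DecidableEq V]
    {src tgt : A → V} {s t : V} {u : A → ℝ} {K : Set A} {x : A → ℝ}
    (hx : IsFlow src tgt s t u K x) {W : Finset V} (hsW : s ∈ W) (htW : t ∉ W) :
    flowValue src tgt s x =
      ∑ a, x a * ((if src a ∈ W then 1 else 0) - (if tgt a ∈ W then 1 else 0)) := by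
  have h1 : ∑ v ∈ W, netOut src tgt x v = flowValue src tgt s x := by
    rw [Finset.sum_eq_single_of_mem s hsW, netOut_eq_sub, flowValue]
    intro v hv hvs
    rw [netOut_eq_sub, hx.2.2 v hvs (fun h => htW (h ▸ hv)), sub_self]
  rw [← h1]
  simp only [netOut]
  rw [Finset.sum_comm]
  refine Finset.sum_congr rfl fun a _ => ?_
  rw [← Finset.mul_sum, Finset.sum_sub_distrib]
  simp

/-- Weak duality, keeping track of the removed arcs: these contribute nothing to the cut. -/
lemma flowValue_le_cut {V A : Type*} [Fintype V] [Fintype A] [DecidableEq V]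
    {src tgt : A → V} {s t : V} {u : A → ℝ} {K : Set A} {x : A → ℝ}
    (hx : IsFlow src tgt s t u K x) {W : Finset V} (hsW : s ∈ W) (htW : t ∉ W) :
    flowValue src tgt s x ≤ cutCapacity src tgt u W -
      ∑ a ∈ univ.filter (fun a => src a ∈ W ∧ tgt a ∉ W), K.indicator u a := by
  classical
  rw [flowValue_eq_across hx hsW htW, cutCapacity, ← Finset.sum_sub_distrib, Finset.sum_filter]
  refine Finset.sum_le_sum fun a _ => ?_
  obtain ⟨h0, h1⟩ := hx.1 a
  have hK := hx.2.1 a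
  by_cases hs : src a ∈ W <;> by_cases ht : tgt a ∈ W <;> by_cases hk : a ∈ K <;>
    simp [hs, ht, hk] <;> first | assumption | exact (hK hk).le

/-- `d` points into the box `0 ≤ x ≤ u` at `x`, i.e. `d` is an arc flow in the residual
network of `x`. -/
def IsResidual {A : Type*} (u x d : A → ℝ) : Prop :=
  ∀ a, (x a = 0 → 0 ≤ d a) ∧ (x a = u a → d a ≤ 0)

/-- A residual direction carrying one unit from `s` to `t` gives a flow of larger value. -/
lemma exists_flow_gt {V A : Type*} [Fintype V] [Fintype A] [DecidableEq V]
    {src tgt : A → V} {s t : V} {u : A → ℝ} {x d : A → ℝ} (hst : s ≠ t)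
    (hx : IsFlow src tgt s t u ∅ x) (hd : IsResidual u x d)
    (hnet : ∀ v, netOut src tgt d v = (if v = s then 1 else 0) - (if v = t then 1 else 0)) :
    ∃ y, IsFlow src tgt s t u ∅ y ∧ flowValue src tgt s x < flowValue src tgt s y := by
  have hev : ∀ᶠ δ : ℝ in nhdsWithin 0 (Set.Ioi 0),
      ∀ a, 0 ≤ x a + δ * d a ∧ x a + δ * d a ≤ u a := by
    refine Filter.eventually_all.2 fun a => ?_
    have hpos : ∀ᶠ δ : ℝ in nhdsWithin 0 (Set.Ioi 0), 0 < δ := self_mem_nhdsWithin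
    have hlim : Filter.Tendsto (fun δ : ℝ => x a + δ * d a) (nhdsWithin 0 (Set.Ioi 0))
        (nhds (x a)) := by
      have : Continuous (fun δ : ℝ => x a + δ * d a) := by fun_prop
      simpa using (this.tendsto 0).mono_left nhdsWithin_le_nhds
    obtain ⟨h0, h1⟩ := hx.1 a
    refine Filter.Eventually.and ?_ ?_
    · rcases h0.eq_or_lt with h | h
      · filter_upwards [hpos] with δ hδ
        have := mul_nonneg hδ.le ((hd a).1 h.symm)
        linarith
      · exact (hlim.eventually_const_lt h).mono fun _ hδ => hδ.le
    · rcases h1.eq_or_lt with h | h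
      · filter_upwards [hpos] with δ hδ
        have := mul_nonpos_of_nonneg_of_nonpos hδ.le ((hd a).2 h)
        linarith
      · exact (hlim.eventually_lt_const h).mono fun _ hδ => hδ.le
  obtain ⟨δ, hbox, hδ⟩ := (hev.and (self_mem_nhdsWithin : Set.Ioi (0 : ℝ) ∈ _)).exists
  have hδ : 0 < δ := hδ
  refine ⟨x + δ • d, ⟨fun a => by simpa using hbox a, by simp, fun v hvs hvt => ?_⟩, ?_⟩
  · have h := netOut_eq_sub src tgt (x + δ • d) v
    have hxv := netOut_eq_sub src tgt x v
    rw [hx.2.2 v hvs hvt, sub_self] at hxv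
    rw [netOut_add, netOut_smul, hnet, hxv] at h
    simp only [hvs, hvt, if_false] at h
    linarith
  · rw [flowValue, flowValue, ← netOut_eq_sub, ← netOut_eq_sub, netOut_add, netOut_smul, hnet]
    simp [hst, hδ]

/-- Strong duality: the value of a maximum flow is the capacity of some s-t cut. The cut
consists of the nodes to which the residual network can send one unit from `s`. -/
lemma exists_cut_eq {V A : Type*} [Fintype V] [Fintype A] [DecidableEq V] [DecidableEq A]
    {src tgt : A → V} {s t : V} {u : A → ℝ} {x : A → ℝ} (hst : s ≠ t)
    (hx : IsFlow src tgt s t u ∅ x)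
    (hmax : ∀ y, IsFlow src tgt s t u ∅ y → flowValue src tgt s y ≤ flowValue src tgt s x) :
    ∃ W : Finset V, s ∈ W ∧ t ∉ W ∧ flowValue src tgt s x = cutCapacity src tgt u W := by
  classical
  let W : Finset V := univ.filter fun w => ∃ d, IsResidual u x d ∧
    ∀ v, netOut src tgt d v = (if v = s then 1 else 0) - (if v = w then 1 else 0)
  have hW : ∀ w, w ∈ W ↔ ∃ d, IsResidual u x d ∧
      ∀ v, netOut src tgt d v = (if v = s then 1 else 0) - (if v = w then 1 else 0) := by
    simp [W]
  have hsW : s ∈ W := (hW s).2 ⟨0, by simp [IsResidual], by simp [netOut]⟩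
  have htW : t ∉ W := by
    rw [hW]
    rintro ⟨d, hd, hnet⟩
    obtain ⟨y, hy, hlt⟩ := exists_flow_gt hst hx hd hnet
    exact absurd (hmax y hy) (not_le.2 hlt)
  -- an unsaturated arc leaving `W` would extend a residual direction to its head
  have hout : ∀ a, src a ∈ W → tgt a ∉ W → x a = u a := by
    intro a ha hb
    by_contra hne
    obtain ⟨d, hd, hnet⟩ := (hW _).1 ha
    refine hb ((hW _).2 ⟨d + Pi.single a 1, fun b => ?_, fun v => ?_⟩)
    · obtain ⟨h0, h1⟩ := hd b
      rcases eq_or_ne b a with rfl | hba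
      · simp only [Pi.add_apply, Pi.single_eq_same]
        exact ⟨fun h => by linarith [h0 h], fun h => absurd h hne⟩
      · simpa [hba] using hd b
    · rw [netOut_add, netOut_single, hnet]
      simp only [eq_comm (b := v)]
      ring
  -- an entering arc with positive flow would do so backwards
  have hin : ∀ a, src a ∉ W → tgt a ∈ W → x a = 0 := by
    intro a hb ha
    by_contra hne
    obtain ⟨d, hd, hnet⟩ := (hW _).1 ha
    refine hb ((hW _).2 ⟨d + Pi.single a (-1), fun b => ?_, fun v => ?_⟩)
    · obtain ⟨h0, h1⟩ := hd b
      rcases eq_or_ne b a with rfl | hba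
      · simp only [Pi.add_apply, Pi.single_eq_same]
        exact ⟨fun h => absurd h hne, fun h => by linarith [h1 h]⟩
      · simpa [hba] using hd b
    · rw [netOut_add, netOut_single, hnet]
      simp only [eq_comm (b := v)]
      ring
  refine ⟨W, hsW, htW, ?_⟩
  rw [flowValue_eq_across hx hsW htW, cutCapacity, Finset.sum_filter]
  refine Finset.sum_congr rfl fun a _ => ?_
  have ho := hout a
  have hi := hin a
  clear_value W
  clear hW hout hin hsW htW
  by_cases hs : src a ∈ W <;> by_cases ht : tgt a ∈ W <;> simp_all

/-- If the job set `J` contains a minimum s-t cut (the cut determined by `W`), then it is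
optimal to schedule all jobs at the same time: the maximum throughput over all schedules
equals `(T−1)·F(N,∅)`, attained by assigning every job to period 1. -/
theorem allJobsAtTimeOne_optimal_of_minCut_subset_jobs
    {V A : Type*} [Fintype V] [Fintype A] [DecidableEq V] [DecidableEq A]
    (src tgt : A → V) (s t : V) (u : A → ℝ)
    (hst : s ≠ t) (hu : ∀ a, 0 ≤ u a)
    (J : Set A) (T : ℕ) (hT : 1 ≤ T)
    (F : Set A → ℝ)
    (hF : ∀ K : Set A, IsGreatest (flowValues src tgt s t u K) (F K))
    (W : Finset V) (hsW : s ∈ W) (htW : t ∉ W)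
    (hmin : ∀ W' : Finset V, s ∈ W' → t ∉ W' →
      cutCapacity src tgt u W ≤ cutCapacity src tgt u W')
    (hSJ : ∀ a, src a ∈ W → tgt a ∉ W → a ∈ J) :
    IsGreatest
      {z | ∃ σ : A → ℕ, (∀ a ∈ J, σ a ∈ Finset.Icc 1 T) ∧ z = throughput F J T σ}
      (((T : ℝ) - 1) * F ∅) ∧
    throughput F J T (fun _ => 1) = ((T : ℝ) - 1) * F ∅ := by
  classical
  -- a minimum cut bounds every flow, and the maximum flow fills some cut
  have hFcut : F ∅ = cutCapacity src tgt u W := by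
    obtain ⟨⟨x, hx, hval⟩, hub⟩ := hF ∅
    apply le_antisymm
    · have := flowValue_le_cut hx hsW htW
      simpa [hval] using this
    · obtain ⟨W', hs', ht', heq⟩ := exists_cut_eq hst hx
        (fun y hy => hval ▸ hub ⟨y, hy, rfl⟩)
      rw [hval, heq]
      exact hmin W' hs' ht'
  have hFle : ∀ K : Set A, F K ≤ F ∅ -
      ∑ a ∈ univ.filter (fun a => src a ∈ W ∧ tgt a ∉ W), K.indicator u a := by
    intro K
    obtain ⟨⟨x, hx, hval⟩, -⟩ := hF K
    rw [hval, hFcut]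
    exact flowValue_le_cut hx hsW htW
  have hF0 : ∀ K : Set A, 0 ≤ F K := fun K =>
    (hF K).2 ⟨0, ⟨fun a => ⟨le_rfl, hu a⟩, fun _ _ => rfl, by simp⟩, by simp [flowValue]⟩
  have hub : ∀ σ : A → ℕ, (∀ a ∈ J, σ a ∈ Finset.Icc 1 T) →
      throughput F J T σ ≤ ((T : ℝ) - 1) * F ∅ := by
    intro σ hσ
    refine (Finset.sum_le_sum fun i _ => hFle {a | a ∈ J ∧ σ a = i}).trans ?_
    rw [Finset.sum_sub_distrib, Finset.sum_comm]
    -- each arc of the cut is a job, hence is removed in exactly one period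
    have hone : ∑ a ∈ univ.filter (fun a => src a ∈ W ∧ tgt a ∉ W), ∑ i ∈ Finset.Icc 1 T,
        Set.indicator {a | a ∈ J ∧ σ a = i} u a = F ∅ := by
      rw [hFcut, cutCapacity]
      refine Finset.sum_congr rfl fun a ha => ?_
      simp only [Finset.mem_filter, Finset.mem_univ, true_and] at ha
      have haJ := hSJ a ha.1 ha.2
      simp only [Set.indicator_apply, Set.mem_ofPred_eq, haJ, true_and, Finset.sum_ite_eq, hσ a haJ, if_true]
    rw [hone, Finset.sum_const, Nat.card_Icc]
    simp [sub_mul]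
  have hattain : throughput F J T (fun _ => 1) = ((T : ℝ) - 1) * F ∅ := by
    apply le_antisymm (hub _ fun a _ => by simp [hT])
    rw [throughput, ← Finset.add_sum_erase _ _ (Finset.mem_Icc.2 ⟨le_rfl, hT⟩)]
    have hrest : ∑ i ∈ (Finset.Icc 1 T).erase 1, F {a | a ∈ J ∧ 1 = i} =
        ((T : ℝ) - 1) * F ∅ := by
      rw [Finset.sum_congr rfl (g := fun _ => F ∅)]
      · rw [Finset.sum_const, Finset.card_erase_of_mem (Finset.mem_Icc.2 ⟨le_rfl, hT⟩)]
        simp [Nat.cast_sub hT]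
      · intro i hi
        congr 1
        ext a
        simp [(Finset.ne_of_mem_erase hi).symm]
    rw [hrest]
    linarith [hF0 {a | a ∈ J ∧ 1 = 1}]
  refine ⟨⟨⟨fun _ => 1, fun a _ => by simp [hT], hattain.symm⟩, ?_⟩, hattain⟩
  rintro z ⟨σ, hσ, rfl⟩
  exact hub σ hσ
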